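/- arXiv:2312.15607 — 5 statements merged into one kernel-verified Lean document; each statement's English description precedes it below -/
import Mathlib

section
/- For every s ∈ (0,1) and every real λ ≥ 0, the function t ↦ (e^{−tλ} − 1) t^{−1−s} is integrable on (0,∞) and (1/Γ(−s)) ∫₀^∞ (e^{−tλ} − 1) t^{−1−s} dt = λ^s, where Γ(−s) is defined as −Γ(1−s)/s with Γ the Gamma function. -/
open MeasureTheory Real Set

open Asymptotics Filter Topology

/-!
Integrating by parts against `t ^ (-s)`, with derivative `-s * t ^ (-1 - s)`, turns the integral
into `-(λ / s) * ∫ t ^ (-s) * exp (-λ t)`, an Euler integral for `Γ(1 - s)`. The boundary terms need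
no estimate: after the substitution `t = exp x`, both `t ^ (-s) * (exp (-λ t) - 1)` and its
`x`-derivative are integrable over the whole line, so that the former vanishes at `±∞`.
-/

section ExpSubstitution

variable {E : Type*} [NormedAddCommGroup E] [NormedSpace ℝ E]

theorem integral_exp_smul_comp_exp (g : ℝ → E) :
    ∫ x, exp x • g (exp x) = ∫ t in Ioi 0, g t := by
  rw [← range_exp, ← image_univ, integral_image_eq_integral_abs_deriv_smul MeasurableSet.univ
    (fun x _ ↦ (hasDerivAt_exp x).hasDerivWithinAt) exp_injective.injOn]
  simp only [abs_exp, setIntegral_univ]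

theorem integrable_exp_smul_comp_exp_iff {g : ℝ → E} :
    Integrable (fun x ↦ exp x • g (exp x)) ↔ IntegrableOn g (Ioi 0) := by
  rw [← range_exp, ← image_univ, integrableOn_image_iff_integrableOn_abs_deriv_smul
    MeasurableSet.univ (fun x _ ↦ (hasDerivAt_exp x).hasDerivWithinAt) exp_injective.injOn]
  simp only [abs_exp, integrableOn_univ]

theorem integral_rpow_smul_deriv_Ioi {f f' : ℝ → E} {z : ℝ}
    (hderiv : ∀ t ∈ Ioi (0 : ℝ), HasDerivAt f (f' t) t)
    (hf : IntegrableOn (fun t ↦ t ^ (z - 1) • f t) (Ioi 0))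
    (hf' : IntegrableOn (fun t ↦ t ^ z • f' t) (Ioi 0)) :
    ∫ t in Ioi 0, t ^ z • f' t = -z • ∫ t in Ioi 0, t ^ (z - 1) • f t := by
  set g : ℝ → E := fun t ↦ t ^ z • f t
  set g' : ℝ → E := fun t ↦ t ^ z • f' t + z • t ^ (z - 1) • f t
  have g_comp_exp (x : ℝ) : g (exp x) = exp x • exp x ^ (z - 1) • f (exp x) := by
    rw [smul_smul, rpow_sub_one (exp_pos x).ne', mul_div_cancel₀ _ (exp_pos x).ne']
  have g_deriv (x : ℝ) : HasDerivAt (fun x ↦ g (exp x)) (exp x • g' (exp x)) x := by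
    have hpow := hasDerivAt_rpow_const (p := z) (Or.inl (exp_pos x).ne')
    have hg : HasDerivAt g (g' (exp x)) (exp x) := by
      simpa only [g, g', smul_smul] using! hpow.smul (hderiv _ (exp_pos x))
    exact hg.scomp x (hasDerivAt_exp x)
  have hg : Integrable (fun x ↦ g (exp x)) := by
    simpa only [g_comp_exp] using integrable_exp_smul_comp_exp_iff.2 hf
  have hg' : IntegrableOn g' (Ioi 0) := hf'.add (hf.smul z)
  have integral_g' : ∫ t in Ioi 0, g' t = 0 := by
    rw [← integral_exp_smul_comp_exp]
    exact integral_eq_zero_of_hasDerivAt_of_integrable g_deriv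
      (integrable_exp_smul_comp_exp_iff.2 hg') hg
  rw [neg_smul, ← integral_smul, ← add_eq_zero_iff_eq_neg, ← integral_g']
  exact (integral_add hf' (hf.smul z)).symm

end ExpSubstitution

theorem hasDerivAt_exp_neg_mul_sub_one (lam t : ℝ) :
    HasDerivAt (fun t ↦ exp (-t * lam) - 1) (-lam * exp (-t * lam)) t := by
  simpa [mul_comm] using (((hasDerivAt_neg t).mul_const lam).exp).sub_const 1

theorem isBigO_exp_neg_mul_sub_one_atTop {lam : ℝ} (hlam : 0 ≤ lam) :
    (fun t ↦ exp (-t * lam) - 1) =O[atTop] fun _ ↦ (1 : ℝ) := by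
  refine IsBigO.of_bound 1 ?_
  filter_upwards [eventually_ge_atTop 0] with t ht
  have hle : exp (-t * lam) ≤ 1 := exp_le_one_iff.2 (by nlinarith)
  rw [norm_one, mul_one, norm_eq_abs, abs_le]
  constructor <;> linarith [exp_pos (-t * lam)]

theorem isBigO_exp_neg_mul_sub_one_nhds_zero (lam : ℝ) :
    (fun t ↦ exp (-t * lam) - 1) =O[𝓝 0] fun t ↦ t := by
  simpa using (hasDerivAt_exp_neg_mul_sub_one lam 0).isBigO_sub

theorem integrableOn_exp_neg_mul_sub_one_mul_rpow {s lam : ℝ} (hs : s ∈ Ioo 0 1)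
    (hlam : 0 ≤ lam) :
    IntegrableOn (fun t ↦ (exp (-t * lam) - 1) * t ^ (-1 - s)) (Ioi 0) := by
  have hcont : Continuous fun t ↦ exp (-t * lam) - 1 := by fun_prop
  have htop : (fun t ↦ exp (-t * lam) - 1) =O[atTop] fun t ↦ t ^ (-0 : ℝ) := by
    simpa only [neg_zero, rpow_zero] using isBigO_exp_neg_mul_sub_one_atTop hlam
  have hzero : (fun t ↦ exp (-t * lam) - 1) =O[𝓝[>] 0] fun t ↦ t ^ (-(-1) : ℝ) := by
    simpa only [neg_neg, rpow_one] using
      (isBigO_exp_neg_mul_sub_one_nhds_zero lam).mono nhdsWithin_le_nhds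
  have hmellin := mellin_convergent_of_isBigO_scalar
    (hcont.locallyIntegrable.locallyIntegrableOn _)
    htop (neg_lt_zero.2 hs.1) hzero (neg_lt_neg hs.2)
  simpa only [mul_comm, neg_sub_comm] using hmellin

theorem integral_rpow_neg_mul_exp_neg_mul {s lam : ℝ} (hs : s < 1) (hlam : 0 < lam) :
    ∫ t in Ioi 0, t ^ (-s) * exp (-t * lam) = Gamma (1 - s) * lam ^ (s - 1) := by
  have hpow : (1 / lam) ^ (1 - s) = lam ^ (s - 1) := by
    rw [one_div, inv_rpow hlam.le, ← rpow_neg hlam.le, neg_sub]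
  have euler := integral_rpow_mul_exp_neg_mul_Ioi (sub_pos.2 hs) hlam
  simpa only [hpow, sub_sub_cancel_left, neg_mul, mul_comm lam, mul_comm (Gamma _)] using euler

theorem Gamma_one_sub_eq_neg_mul {s : ℝ} (hs : s ≠ 0) : Gamma (1 - s) = -s * Gamma (-s) := by
  rw [sub_eq_neg_add, Gamma_add_one (neg_ne_zero.2 hs)]

theorem integral_exp_neg_mul_sub_one_mul_rpow {s lam : ℝ} (hs : s ∈ Ioo 0 1) (hlam : 0 ≤ lam) :
    ∫ t in Ioi 0, (exp (-t * lam) - 1) * t ^ (-1 - s) = Gamma (-s) * lam ^ s := by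
  have hs₀ : s ≠ 0 := hs.1.ne'
  obtain rfl | hlam_pos := hlam.eq_or_lt
  · simp [zero_rpow hs₀]
  have integrable_deriv :
      IntegrableOn (fun t ↦ t ^ (-s) • (-lam * exp (-t * lam))) (Ioi 0) := by
    have hexp := integrableOn_rpow_mul_exp_neg_mul_rpow (neg_lt_neg hs.2) one_pos hlam_pos
    simpa [IntegrableOn, mul_comm, mul_left_comm] using hexp.const_mul (-lam)
  have integrable_self :
      IntegrableOn (fun t ↦ t ^ (-s - 1) • (exp (-t * lam) - 1)) (Ioi 0) := by
    simpa only [smul_eq_mul, mul_comm, neg_sub_comm] using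
      integrableOn_exp_neg_mul_sub_one_mul_rpow hs hlam
  have by_parts := integral_rpow_smul_deriv_Ioi
    (fun t _ ↦ hasDerivAt_exp_neg_mul_sub_one lam t) integrable_self integrable_deriv
  refine mul_left_cancel₀ hs₀ ?_
  calc s * ∫ t in Ioi 0, (exp (-t * lam) - 1) * t ^ (-1 - s)
      = ∫ t in Ioi 0, t ^ (-s) * (-lam * exp (-t * lam)) := by
        simpa only [smul_eq_mul, neg_neg, mul_comm, neg_sub_comm] using by_parts.symm
    _ = -lam * ∫ t in Ioi 0, t ^ (-s) * exp (-t * lam) := by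
        simp only [mul_left_comm _ (-lam), integral_const_mul]
    _ = -lam * (Gamma (1 - s) * lam ^ (s - 1)) := by
        rw [integral_rpow_neg_mul_exp_neg_mul hs.2 hlam_pos]
    _ = s * (Gamma (-s) * lam ^ s) := by
        rw [Gamma_one_sub_eq_neg_mul hs₀, rpow_sub_one hlam_pos.ne']
        field

/-- **Spectral representation of fractional powers.**
For every `s ∈ (0,1)` and every real `λ ≥ 0`, the function
`t ↦ (e^{−tλ} − 1) t^{−1−s}` is integrable on `(0,∞)` and
`(1/Γ(−s)) ∫₀^∞ (e^{−tλ} − 1) t^{−1−s} dt = λ^s`,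
where `Γ(−s) := −Γ(1−s)/s`. -/
theorem spectral_representation_fractional_power
    (s lam : ℝ) (hs : s ∈ Set.Ioo (0 : ℝ) 1) (hlam : 0 ≤ lam) :
    IntegrableOn (fun t : ℝ => (Real.exp (-t * lam) - 1) * t ^ (-1 - s)) (Set.Ioi 0) ∧
      (1 / (-(Real.Gamma (1 - s)) / s)) *
          ∫ t in Set.Ioi (0 : ℝ), (Real.exp (-t * lam) - 1) * t ^ (-1 - s) = lam ^ s := by
  have hGamma : -Gamma (1 - s) / s = Gamma (-s) := by
    rw [Gamma_one_sub_eq_neg_mul hs.1.ne', neg_mul, neg_neg, mul_div_cancel_left₀ _ hs.1.ne']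
  have hGamma_ne : -Gamma (1 - s) / s ≠ 0 :=
    div_ne_zero (neg_ne_zero.2 (Gamma_pos_of_pos (sub_pos.2 hs.2)).ne') hs.1.ne'
  refine ⟨integrableOn_exp_neg_mul_sub_one_mul_rpow hs hlam, ?_⟩
  rw [integral_exp_neg_mul_sub_one_mul_rpow hs hlam, ← hGamma, one_div,
    inv_mul_cancel_left₀ hGamma_ne]
end

section
/- Let n ≥ 1 be an integer, Ω ⊆ ℝⁿ an open set, σ : ℝⁿ → ℝ continuously differentiable, v : ℝⁿ → ℝ twice continuously differentiable, and F : ℝⁿ → ℝ such that −∇·(σ∇v)(x) = F(x) for all x ∈ Ω. Let φ : ℝⁿ → ℝ be twice continuously differentiable with compact support contained in Ω. Then the function ṽ := v + φ satisfies −∇·(σ∇ṽ)(x) = F(x) − ∇·(σ∇φ)(x) for all x ∈ Ω, and for every x ∉ Ω (in particular for every x ∈ ∂Ω) one has ṽ(x) = v(x) and the total derivative of ṽ at x equals the total derivative of v at x. -/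
open MeasureTheory Real Set

/-- The divergence-form operator `∇·(σ∇u)(x) = ∑ᵢ ∂ᵢ(σ ∂ᵢ u)(x)` on `ℝⁿ`. -/
noncomputable def divSigmaGrad (n : ℕ) (σ u : EuclideanSpace ℝ (Fin n) → ℝ)
    (x : EuclideanSpace ℝ (Fin n)) : ℝ :=
  ∑ i : Fin n,
    fderiv ℝ (fun y => σ y * fderiv ℝ u y (EuclideanSpace.single i 1)) x
      (EuclideanSpace.single i 1)

open scoped Topology

section DirectionalDerivative

variable {𝕜 E A : Type*} [NontriviallyNormedField 𝕜] [NormedAddCommGroup E] [NormedSpace 𝕜 E]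
  [NormedRing A] [NormedAlgebra 𝕜 A] {σ u v w : E → A} {x : E}

theorem differentiableAt_mul_fderiv_apply (hσ : DifferentiableAt 𝕜 σ x)
    (hu : DifferentiableAt 𝕜 (fderiv 𝕜 u) x) (e : E) :
    DifferentiableAt 𝕜 (fun y => σ y * fderiv 𝕜 u y e) x :=
  hσ.mul (hu.clm_apply (differentiableAt_const e))

theorem fderiv_mul_fderiv_add_apply (hσ : DifferentiableAt 𝕜 σ x)
    (hv : ContDiffAt 𝕜 2 v x) (hw : ContDiffAt 𝕜 2 w x) (e : E) :
    fderiv 𝕜 (fun y => σ y * fderiv 𝕜 (fun z => v z + w z) y e) x =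
      fderiv 𝕜 (fun y => σ y * fderiv 𝕜 v y e) x +
        fderiv 𝕜 (fun y => σ y * fderiv 𝕜 w y e) x := by
  have differentiableAt_flux {u : E → A} (hu : ContDiffAt 𝕜 2 u x) :
      DifferentiableAt 𝕜 (fun y => σ y * fderiv 𝕜 u y e) x :=
    differentiableAt_mul_fderiv_apply hσ
      ((hu.fderiv_right (m := 1) one_add_one_eq_two.le).differentiableAt one_ne_zero) e
  have flux_add : (fun y => σ y * fderiv 𝕜 (fun z => v z + w z) y e) =ᶠ[𝓝 x]
      fun y => σ y * fderiv 𝕜 v y e + σ y * fderiv 𝕜 w y e := by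
    filter_upwards [hv.eventually (by simp), hw.eventually (by simp)] with y hvy hwy
    rw [fderiv_fun_add (hvy.differentiableAt two_ne_zero) (hwy.differentiableAt two_ne_zero),
      add_apply, mul_add]
  rw [flux_add.fderiv_eq, fderiv_fun_add (differentiableAt_flux hv) (differentiableAt_flux hw)]

end DirectionalDerivative

theorem add_eventuallyEq_left_of_notMem_tsupport {X M : Type*} [TopologicalSpace X]
    [AddZeroClass M] (v : X → M) {φ : X → M} {x : X} (hx : x ∉ tsupport φ) :
    (fun y => v y + φ y) =ᶠ[𝓝 x] v := by
  filter_upwards [notMem_tsupport_iff_eventuallyEq.mp hx] with y hy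
  rw [hy, Pi.zero_apply, add_zero]

section DivSigmaGrad

variable {n : ℕ} {σ v : EuclideanSpace ℝ (Fin n) → ℝ}

theorem divSigmaGrad_add {w : EuclideanSpace ℝ (Fin n) → ℝ} {x : EuclideanSpace ℝ (Fin n)}
    (hσ : DifferentiableAt ℝ σ x) (hv : ContDiffAt ℝ 2 v x) (hw : ContDiffAt ℝ 2 w x) :
    divSigmaGrad n σ (fun y => v y + w y) x = divSigmaGrad n σ v x + divSigmaGrad n σ w x := by
  simp only [divSigmaGrad, fderiv_mul_fderiv_add_apply hσ hv hw, add_apply,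
    Finset.sum_add_distrib]

/-- Outside `Ω` the conclusion is an equality of germs, which carries all boundary data at once and
is meaningful where `v` is not differentiable. -/
theorem gauge_invariance_local_source_general {Ω : Set (EuclideanSpace ℝ (Fin n))}
    {F φ : EuclideanSpace ℝ (Fin n) → ℝ}
    (hσ : ∀ x ∈ Ω, DifferentiableAt ℝ σ x) (hv : ∀ x ∈ Ω, ContDiffAt ℝ 2 v x)
    (hF : ∀ x ∈ Ω, -divSigmaGrad n σ v x = F x)
    (hφ : ∀ x ∈ Ω, ContDiffAt ℝ 2 φ x) (hφΩ : tsupport φ ⊆ Ω) :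
    (∀ x ∈ Ω, -divSigmaGrad n σ (fun y => v y + φ y) x = F x - divSigmaGrad n σ φ x) ∧
      ∀ x ∉ Ω, (fun y => v y + φ y) =ᶠ[𝓝 x] v := by
  refine ⟨fun x hx => ?_, fun x hx => ?_⟩
  · rw [divSigmaGrad_add (hσ x hx) (hv x hx) (hφ x hx), neg_add', hF x hx]
  · exact add_eventuallyEq_left_of_notMem_tsupport v fun hxφ => hx (hφΩ hxφ)

end DivSigmaGrad

/-- **Gauge invariance for the local inverse source problem.**
If `−∇·(σ∇v) = F` in an open set `Ω`, and `φ` is `C²` with compact support in `Ω`,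
then `ṽ := v + φ` satisfies `−∇·(σ∇ṽ) = F − ∇·(σ∇φ)` in `Ω`, while outside `Ω`
(in particular on `∂Ω`) `ṽ` and its total derivative agree with those of `v`. -/
theorem gauge_invariance_local_source
    (n : ℕ) (hn : 1 ≤ n) (Ω : Set (EuclideanSpace ℝ (Fin n))) (hΩ : IsOpen Ω)
    (σ v F φ : EuclideanSpace ℝ (Fin n) → ℝ)
    (hσ : ContDiff ℝ 1 σ) (hv : ContDiff ℝ 2 v)
    (hF : ∀ x ∈ Ω, -divSigmaGrad n σ v x = F x)
    (hφ : ContDiff ℝ 2 φ) (hφc : HasCompactSupport φ) (hφΩ : tsupport φ ⊆ Ω) :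
    (∀ x ∈ Ω, -divSigmaGrad n σ (fun y => v y + φ y) x
        = F x - divSigmaGrad n σ φ x) ∧
    (∀ x ∉ Ω, (v x + φ x = v x) ∧
        fderiv ℝ (fun y => v y + φ y) x = fderiv ℝ v x) := by
  have ⟨source, germ⟩ := gauge_invariance_local_source_general
    (fun _ _ => hσ.differentiable one_ne_zero _) (fun _ _ => hv.contDiffAt) hF
    (fun _ _ => hφ.contDiffAt) hφΩ
  exact ⟨source, fun x hx => ⟨(germ x hx).eq_of_nhds, (germ x hx).fderiv_eq⟩⟩
end

section
/- Let n ≥ 1 be an integer and s ∈ (0,1). For every y > 0, the function x ↦ P_{n,s}(x,y) is integrable on ℝⁿ and ∫_{ℝⁿ} P_{n,s}(x,y) dx = 1; equivalently, ∫_{ℝⁿ} (1 + |x|²)^{−(n+2s)/2} dx = π^{n/2} Γ(s) / Γ((n+2s)/2). -/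
/-!
The identity `r ^ (-a) = Γ(a)⁻¹ ∫₀^∞ t ^ (a - 1) e ^ (-r t) dt` writes a negative power of a
positive function as a superposition of exponentials, so that by Fubini its integral is a Mellin
transform of the moment-generating function at negative arguments. For `‖x‖ ^ 2 + c` on a
`d`-dimensional space the latter is a Gaussian integral, equal to `(π / t) ^ (d / 2) e ^ (-c t)`
at `-t`, and what remains in `t` is again a Gamma integral, with parameter `a - d / 2`. The kernel
is the case `a = (n + 2 s) / 2`, `c = y ^ 2`, `d = n`, in which `a - d / 2 = s`.
-/

open MeasureTheory Real Set

/-- The Caffarelli–Silvestre normalizing constant `c_{n,s} = Γ((n+2s)/2)/(π^{n/2} Γ(s))`. -/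
noncomputable def csConst (n : ℕ) (s : ℝ) : ℝ :=
  Real.Gamma (((n : ℝ) + 2 * s) / 2) / (Real.pi ^ ((n : ℝ) / 2) * Real.Gamma s)

/-- The Caffarelli–Silvestre Poisson kernel
`P_{n,s}(x,y) = c_{n,s} y^{2s} (|x|² + y²)^{−(n+2s)/2}` for `x ∈ ℝⁿ`, `y > 0`. -/
noncomputable def csKernel (n : ℕ) (s : ℝ) (x : EuclideanSpace ℝ (Fin n)) (y : ℝ) : ℝ :=
  csConst n s * y ^ (2 * s) * (‖x‖ ^ 2 + y ^ 2) ^ (-(((n : ℝ) + 2 * s) / 2))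

theorem integral_Ioi_rpow_mul_exp_neg_mul {a r : ℝ} (ha : 0 < a) (hr : 0 < r) :
    ∫ t in Ioi 0, t ^ (a - 1) * exp (-(r * t)) = Gamma a * r ^ (-a) := by
  rw [integral_rpow_mul_exp_neg_mul_Ioi ha hr, one_div, inv_rpow hr.le, rpow_neg hr.le, mul_comm]

section NegativeMoments

open ProbabilityTheory

variable {α : Type*} {mα : MeasurableSpace α} {μ : Measure α} [SFinite μ] {f : α → ℝ} {a : ℝ}

theorem integrable_prod_rpow_mul_exp_neg_mul (hexp : Iio 0 ⊆ integrableExpSet f μ)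
    (hmgf : IntegrableOn (fun t ↦ t ^ (a - 1) * mgf f μ (-t)) (Ioi 0)) :
    Integrable (fun p : α × ℝ ↦ p.2 ^ (a - 1) * exp (-(f p.1 * p.2)))
      (μ.prod (volume.restrict (Ioi 0))) := by
  have hexp_neg {t : ℝ} (ht : 0 < t) : Integrable (fun x ↦ exp (-(f x * t))) μ := by
    simpa [integrableExpSet, mul_comm] using hexp (neg_lt_zero.mpr ht)
  have hf : AEMeasurable f μ :=
    aemeasurable_of_aemeasurable_exp_mul (neg_ne_zero.mpr one_ne_zero)
      (hexp (mem_Iio.mpr neg_one_lt_zero)).aemeasurable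
  have hmeas : AEStronglyMeasurable (fun p : α × ℝ ↦ p.2 ^ (a - 1) * exp (-(f p.1 * p.2)))
      (μ.prod (volume.restrict (Ioi 0))) := by
    have := hf.comp_fst (ν := volume.restrict (Ioi (0 : ℝ)))
    exact AEMeasurable.aestronglyMeasurable (by fun_prop)
  refine (integrable_prod_iff' hmeas).mpr ⟨?_, hmgf.congr ?_⟩
  · filter_upwards [ae_restrict_mem measurableSet_Ioi] with t ht
    exact (hexp_neg ht).const_mul _
  · filter_upwards [ae_restrict_mem measurableSet_Ioi] with t ht
    have ht_pow : 0 ≤ t ^ (a - 1) := rpow_nonneg (le_of_lt ht) _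
    simp [mgf, integral_const_mul, abs_of_nonneg ht_pow, mul_comm t]

theorem integrable_rpow_neg_of_mgf (ha : 0 < a) (hf : ∀ᵐ x ∂μ, 0 < f x)
    (hexp : Iio 0 ⊆ integrableExpSet f μ)
    (hmgf : IntegrableOn (fun t ↦ t ^ (a - 1) * mgf f μ (-t)) (Ioi 0)) :
    Integrable (fun x ↦ f x ^ (-a)) μ := by
  rw [← integrable_const_mul_iff (Gamma_pos_of_pos ha).ne'.isUnit]
  refine (integrable_prod_rpow_mul_exp_neg_mul hexp hmgf).integral_prod_left.congr ?_
  filter_upwards [hf] with x hx using integral_Ioi_rpow_mul_exp_neg_mul ha hx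

theorem integral_rpow_neg_eq_integral_mgf (ha : 0 < a) (hf : ∀ᵐ x ∂μ, 0 < f x)
    (hexp : Iio 0 ⊆ integrableExpSet f μ)
    (hmgf : IntegrableOn (fun t ↦ t ^ (a - 1) * mgf f μ (-t)) (Ioi 0)) :
    ∫ x, f x ^ (-a) ∂μ = (∫ t in Ioi 0, t ^ (a - 1) * mgf f μ (-t)) / Gamma a := by
  rw [eq_div_iff (Gamma_pos_of_pos ha).ne', mul_comm]
  calc Gamma a * ∫ x, f x ^ (-a) ∂μ
      = ∫ x, (∫ t in Ioi 0, t ^ (a - 1) * exp (-(f x * t))) ∂μ := by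
        rw [← integral_const_mul]
        refine integral_congr_ae ?_
        filter_upwards [hf] with x hx using (integral_Ioi_rpow_mul_exp_neg_mul ha hx).symm
    _ = ∫ t in Ioi 0, (∫ x, t ^ (a - 1) * exp (-(f x * t)) ∂μ) :=
        integral_integral_swap (integrable_prod_rpow_mul_exp_neg_mul hexp hmgf)
    _ = ∫ t in Ioi 0, t ^ (a - 1) * mgf f μ (-t) := by
        simp [mgf, integral_const_mul, mul_comm]

end NegativeMoments

section InnerProductSpace

open Module ProbabilityTheory

variable {V : Type*} [NormedAddCommGroup V] [InnerProductSpace ℝ V] [FiniteDimensional ℝ V]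
  [MeasurableSpace V] [BorelSpace V] {a c t : ℝ}

theorem mgf_norm_sq_add_const_neg (c : ℝ) (ht : 0 < t) :
    mgf (fun x : V ↦ ‖x‖ ^ 2 + c) volume (-t) =
      (π / t) ^ (finrank ℝ V / 2 : ℝ) * exp (-(c * t)) := by
  rw [mgf_add_const, mgf, GaussianFourier.integral_rexp_neg_mul_sq_norm ht, neg_mul, mul_comm c]

theorem Iio_zero_subset_integrableExpSet_norm_sq_add_const (c : ℝ) :
    Iio 0 ⊆ integrableExpSet (fun x : V ↦ ‖x‖ ^ 2 + c) volume := by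
  intro u hu
  have ht : 0 < -u := neg_pos.mpr hu
  refine Integrable.of_integral_ne_zero (ne_of_gt ?_)
  calc 0 < (π / -u) ^ (finrank ℝ V / 2 : ℝ) * exp (-(c * -u)) := by positivity
    _ = mgf (fun x : V ↦ ‖x‖ ^ 2 + c) volume u := by
      rw [← mgf_norm_sq_add_const_neg c ht, neg_neg]

theorem rpow_mul_mgf_norm_sq_add_const_neg (a c : ℝ) (ht : 0 < t) :
    t ^ (a - 1) * mgf (fun x : V ↦ ‖x‖ ^ 2 + c) volume (-t) =
      π ^ (finrank ℝ V / 2 : ℝ) * (t ^ (a - finrank ℝ V / 2 - 1) * exp (-(c * t))) := by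
  rw [mgf_norm_sq_add_const_neg c ht, div_rpow pi_pos.le ht.le, sub_right_comm,
    rpow_sub ht (a - 1)]
  ring

theorem integral_Ioi_rpow_mul_mgf_norm_sq_add_const (hc : 0 < c) (ha : (finrank ℝ V / 2 : ℝ) < a) :
    ∫ t in Ioi 0, t ^ (a - 1) * mgf (fun x : V ↦ ‖x‖ ^ 2 + c) volume (-t) =
      π ^ (finrank ℝ V / 2 : ℝ) * Gamma (a - finrank ℝ V / 2) * c ^ (finrank ℝ V / 2 - a) := by
  rw [setIntegral_congr_fun measurableSet_Ioi fun t ↦ rpow_mul_mgf_norm_sq_add_const_neg a c,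
    integral_const_mul, integral_Ioi_rpow_mul_exp_neg_mul (sub_pos.mpr ha) hc, neg_sub, mul_assoc]

theorem integrableOn_rpow_mul_mgf_norm_sq_add_const (hc : 0 < c)
    (ha : (finrank ℝ V / 2 : ℝ) < a) :
    IntegrableOn (fun t ↦ t ^ (a - 1) * mgf (fun x : V ↦ ‖x‖ ^ 2 + c) volume (-t)) (Ioi 0) := by
  refine Integrable.of_integral_ne_zero ?_
  have := Gamma_pos_of_pos (sub_pos.mpr ha)
  rw [integral_Ioi_rpow_mul_mgf_norm_sq_add_const hc ha]
  positivity

theorem integrable_norm_sq_add_const_rpow_neg (hc : 0 < c) (ha : (finrank ℝ V / 2 : ℝ) < a) :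
    Integrable fun x : V ↦ (‖x‖ ^ 2 + c) ^ (-a) :=
  integrable_rpow_neg_of_mgf (lt_of_le_of_lt (by positivity) ha) (.of_forall fun _ ↦ by positivity)
    (Iio_zero_subset_integrableExpSet_norm_sq_add_const c)
    (integrableOn_rpow_mul_mgf_norm_sq_add_const hc ha)

theorem integral_norm_sq_add_const_rpow_neg (hc : 0 < c) (ha : (finrank ℝ V / 2 : ℝ) < a) :
    ∫ x : V, (‖x‖ ^ 2 + c) ^ (-a) =
      π ^ (finrank ℝ V / 2 : ℝ) * Gamma (a - finrank ℝ V / 2) / Gamma a *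
        c ^ (finrank ℝ V / 2 - a) := by
  rw [integral_rpow_neg_eq_integral_mgf (lt_of_le_of_lt (by positivity) ha)
    (.of_forall fun _ ↦ by positivity) (Iio_zero_subset_integrableExpSet_norm_sq_add_const c)
    (integrableOn_rpow_mul_mgf_norm_sq_add_const hc ha),
    integral_Ioi_rpow_mul_mgf_norm_sq_add_const hc ha, div_mul_eq_mul_div]

end InnerProductSpace

section Kernel

variable {n : ℕ} {s y c : ℝ}

theorem integrable_csKernel (hs : 0 < s) (hy : 0 < y) :
    Integrable fun x : EuclideanSpace ℝ (Fin n) ↦ csKernel n s x y := by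
  have hexponent : (Module.finrank ℝ (EuclideanSpace ℝ (Fin n)) / 2 : ℝ) < (n + 2 * s) / 2 := by
    rw [finrank_euclideanSpace_fin]
    linarith
  exact (integrable_norm_sq_add_const_rpow_neg (sq_pos_of_pos hy) hexponent).const_mul _

theorem integral_euclideanSpace_norm_sq_add_const_rpow_neg (n : ℕ) (hs : 0 < s) (hc : 0 < c) :
    ∫ x : EuclideanSpace ℝ (Fin n), (‖x‖ ^ 2 + c) ^ (-((n + 2 * s) / 2)) =
      π ^ (n / 2 : ℝ) * Gamma s / Gamma ((n + 2 * s) / 2) * c ^ (-s) := by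
  have hexponent : (n + 2 * s) / 2 - n / 2 = s := by ring
  have hintegral := integral_norm_sq_add_const_rpow_neg (V := EuclideanSpace ℝ (Fin n))
    (a := (n + 2 * s) / 2) hc (by rw [finrank_euclideanSpace_fin]; linarith)
  rwa [finrank_euclideanSpace_fin, ← neg_sub _ (n / 2 : ℝ), hexponent] at hintegral

theorem integral_csKernel_eq_one (n : ℕ) (hs : 0 < s) (hy : 0 < y) :
    ∫ x : EuclideanSpace ℝ (Fin n), csKernel n s x y = 1 := by
  have hy_pow : (y ^ 2) ^ (-s) = (y ^ (2 * s))⁻¹ := by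
    rw [← rpow_natCast_mul hy.le, ← rpow_neg hy.le, Nat.cast_ofNat, mul_neg]
  have hGamma_s : Gamma s ≠ 0 := (Gamma_pos_of_pos hs).ne'
  have hGamma : Gamma ((n + 2 * s) / 2) ≠ 0 := (Gamma_pos_of_pos (by positivity)).ne'
  simp only [csKernel, csConst]
  rw [integral_const_mul,
    integral_euclideanSpace_norm_sq_add_const_rpow_neg n hs (sq_pos_of_pos hy), hy_pow]
  field_simp

end Kernel

theorem csKernel_integral_one_general
    (n : ℕ) (s : ℝ) (hs : 0 < s) :
    (∀ y : ℝ, 0 < y →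
      Integrable (fun x : EuclideanSpace ℝ (Fin n) => csKernel n s x y) ∧
      ∫ x : EuclideanSpace ℝ (Fin n), csKernel n s x y = 1) ∧
    ∫ x : EuclideanSpace ℝ (Fin n), (1 + ‖x‖ ^ 2) ^ (-(((n : ℝ) + 2 * s) / 2))
      = Real.pi ^ ((n : ℝ) / 2) * Real.Gamma s / Real.Gamma (((n : ℝ) + 2 * s) / 2) := by
  refine ⟨fun y hy ↦ ⟨integrable_csKernel hs hy, integral_csKernel_eq_one n hs hy⟩, ?_⟩
  simpa [add_comm] using integral_euclideanSpace_norm_sq_add_const_rpow_neg n hs one_pos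

/-- **Normalization of the Caffarelli–Silvestre Poisson kernel.**
For every `y > 0`, `x ↦ P_{n,s}(x,y)` is integrable on `ℝⁿ` with
`∫ P_{n,s}(x,y) dx = 1`; equivalently
`∫ (1+|x|²)^{−(n+2s)/2} dx = π^{n/2} Γ(s)/Γ((n+2s)/2)`. -/
theorem csKernel_integral_one
    (n : ℕ) (hn : 1 ≤ n) (s : ℝ) (hs : s ∈ Set.Ioo (0 : ℝ) 1) :
    (∀ y : ℝ, 0 < y →
      Integrable (fun x : EuclideanSpace ℝ (Fin n) => csKernel n s x y) ∧
      ∫ x : EuclideanSpace ℝ (Fin n), csKernel n s x y = 1) ∧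
    ∫ x : EuclideanSpace ℝ (Fin n), (1 + ‖x‖ ^ 2) ^ (-(((n : ℝ) + 2 * s) / 2))
      = Real.pi ^ ((n : ℝ) / 2) * Real.Gamma s / Real.Gamma (((n : ℝ) + 2 * s) / 2) :=
  csKernel_integral_one_general n s hs.1
end

section
/- Let n ≥ 1 be an integer and s ∈ (0,1). For every x ∈ ℝⁿ and y > 0, the function t ↦ e^{−y²/(4t)} (4πt)^{−n/2} e^{−|x|²/(4t)} t^{−1−s} is integrable on (0,∞) and P_{n,s}(x,y) = (y^{2s}/(4^s Γ(s))) ∫₀^∞ e^{−y²/(4t)} (4πt)^{−n/2} e^{−|x|²/(4t)} t^{−1−s} dt. -/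
/-!
The factors `e^{-y²/(4t)}` and `e^{-|x|²/(4t)}` merge into `e^{-b/t}` with `b = (|x|² + y²)/4`, and
the powers of `t` into `t^{-1-a}` with `a = (n+2s)/2`. The substitution `t ↦ 1/t` turns the
integral of `t^{-1-a} e^{-b/t}` into Euler's integral, of value `b^{-a} Γ(a)`, and the
powers of `4` hidden in `b^{-a}` and `(4π)^{-n/2}` combine to `4^s`.
-/

open MeasureTheory Real Set

/-- The left side is the integrand `t ^ (-1 - a) * exp (-(b / t))` after substituting `t = u⁻¹`, in
the form used by `integral_comp_rpow_Ioi`. -/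
lemma comp_rpow_neg_one_rpow_mul_exp_neg_div (a b : ℝ) {u : ℝ} (hu : 0 < u) :
    (|(-1 : ℝ)| * u ^ (-1 - 1 : ℝ)) •
        ((u ^ (-1 : ℝ)) ^ (-1 - a) * exp (-(b / u ^ (-1 : ℝ)))) =
      u ^ (a - 1) * exp (-(b * u)) := by
  have rpow_eq : u ^ (-1 - 1 : ℝ) * (u ^ (-1 : ℝ)) ^ (-1 - a) = u ^ (a - 1) := by
    rw [← rpow_mul hu.le, ← rpow_add hu]
    ring_nf
  rw [← rpow_eq, rpow_neg_one u, div_inv_eq_mul, abs_neg, abs_one, one_mul, smul_eq_mul, mul_assoc]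

lemma integrableOn_rpow_mul_exp_neg_div_Ioi {a b : ℝ} (ha : 0 < a) (hb : 0 < b) :
    IntegrableOn (fun t : ℝ => t ^ (-1 - a) * exp (-(b / t))) (Ioi 0) := by
  rw [← integrableOn_Ioi_comp_rpow_iff _ (p := -1) (by norm_num)]
  have euler : IntegrableOn (fun u : ℝ => u ^ (a - 1) * exp (-(b * u))) (Ioi 0) := by
    simpa only [rpow_one, neg_mul] using
      integrableOn_rpow_mul_exp_neg_mul_rpow (s := a - 1) (by linarith) one_pos hb
  exact euler.congr_fun (fun u hu => (comp_rpow_neg_one_rpow_mul_exp_neg_div a b hu).symm)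
    measurableSet_Ioi

lemma integral_rpow_mul_exp_neg_div_Ioi {a b : ℝ} (ha : 0 < a) (hb : 0 < b) :
    ∫ t in Ioi (0 : ℝ), t ^ (-1 - a) * exp (-(b / t)) = b ^ (-a) * Real.Gamma a := by
  rw [← integral_comp_rpow_Ioi _ (p := -1) (by norm_num),
    setIntegral_congr_fun measurableSet_Ioi fun _ hu =>
      comp_rpow_neg_one_rpow_mul_exp_neg_div a b hu,
    integral_rpow_mul_exp_neg_mul_Ioi ha hb, one_div, inv_rpow hb.le, rpow_neg hb.le]

lemma four_mul_pi_rpow_mul_div_four_rpow (d s : ℝ) {r : ℝ} (hr : 0 ≤ r) :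
    (4 * π) ^ (-d / 2) * (r / 4) ^ (-((d + 2 * s) / 2)) =
      4 ^ s * r ^ (-((d + 2 * s) / 2)) / π ^ (d / 2) := by
  have four_rpow : (4 : ℝ) ^ (-d / 2) = 4 ^ s * 4 ^ (-((d + 2 * s) / 2)) := by
    rw [← rpow_add four_pos]
    ring_nf
  rw [mul_rpow four_pos.le pi_pos.le, div_rpow hr four_pos.le, four_rpow, neg_div,
    rpow_neg pi_pos.le]
  field_simp

/-- The Euclidean heat kernel on `ℝⁿ` at time `t > 0`, with total mass one: the fundamental
solution of `∂ₜu = Δu`. -/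
noncomputable def heatKernel (n : ℕ) (t : ℝ) (x : EuclideanSpace ℝ (Fin n)) : ℝ :=
  (4 * π * t) ^ (-(n : ℝ) / 2) * exp (-‖x‖ ^ 2 / (4 * t))

lemma exp_mul_heatKernel_mul_rpow (n : ℕ) (s c : ℝ) (x : EuclideanSpace ℝ (Fin n)) {t : ℝ}
    (ht : 0 < t) :
    exp (-c / (4 * t)) * heatKernel n t x * t ^ (-1 - s) =
      (4 * π) ^ (-(n : ℝ) / 2) *
        (t ^ (-1 - ((n : ℝ) + 2 * s) / 2) * exp (-((‖x‖ ^ 2 + c) / 4 / t))) := by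
  have exp_eq : exp (-((‖x‖ ^ 2 + c) / 4 / t)) = exp (-c / (4 * t)) * exp (-‖x‖ ^ 2 / (4 * t)) := by
    rw [← Real.exp_add]
    ring_nf
  have rpow_eq : t ^ (-1 - ((n : ℝ) + 2 * s) / 2) = t ^ (-(n : ℝ) / 2) * t ^ (-1 - s) := by
    rw [← rpow_add ht]
    ring_nf
  rw [heatKernel, mul_rpow (by positivity) ht.le, exp_eq, rpow_eq]
  ring

section Subordination

variable {n : ℕ} {s c : ℝ} {x : EuclideanSpace ℝ (Fin n)}

lemma integrableOn_exp_mul_heatKernel_mul_rpow (hs : 0 < (n : ℝ) + 2 * s)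
    (hc : 0 < ‖x‖ ^ 2 + c) :
    IntegrableOn (fun t => exp (-c / (4 * t)) * heatKernel n t x * t ^ (-1 - s)) (Ioi 0) :=
  IntegrableOn.congr_fun
    ((integrableOn_rpow_mul_exp_neg_div_Ioi (half_pos hs) (by positivity)).const_mul _)
    (fun _ ht => (exp_mul_heatKernel_mul_rpow n s c x ht).symm) measurableSet_Ioi

lemma integral_exp_mul_heatKernel_mul_rpow (hs : 0 < (n : ℝ) + 2 * s) (hc : 0 < ‖x‖ ^ 2 + c) :
    ∫ t in Ioi (0 : ℝ), exp (-c / (4 * t)) * heatKernel n t x * t ^ (-1 - s) =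
      4 ^ s * (Real.Gamma (((n : ℝ) + 2 * s) / 2) / π ^ ((n : ℝ) / 2)) *
        (‖x‖ ^ 2 + c) ^ (-(((n : ℝ) + 2 * s) / 2)) := by
  rw [setIntegral_congr_fun measurableSet_Ioi fun _ ht => exp_mul_heatKernel_mul_rpow n s c x ht,
    integral_const_mul, integral_rpow_mul_exp_neg_div_Ioi (half_pos hs) (by positivity),
    ← mul_assoc, four_mul_pi_rpow_mul_div_four_rpow _ _ hc.le]
  ring

end Subordination

lemma csConst_mul_Gamma (n : ℕ) {s : ℝ} (hs : Real.Gamma s ≠ 0) :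
    csConst n s * Real.Gamma s = Real.Gamma (((n : ℝ) + 2 * s) / 2) / π ^ ((n : ℝ) / 2) := by
  rw [csConst, ← div_div, div_mul_cancel₀ _ hs]

theorem csKernel_subordination_general (n : ℕ) {s : ℝ} (hs : 0 < (n : ℝ) + 2 * s)
    (hs_pole : ∀ m : ℕ, s ≠ -m) (x : EuclideanSpace ℝ (Fin n)) {y : ℝ} (hy : 0 < y) :
    IntegrableOn (fun t => exp (-y ^ 2 / (4 * t)) * heatKernel n t x * t ^ (-1 - s)) (Ioi 0) ∧
    csKernel n s x y = y ^ (2 * s) / (4 ^ s * Real.Gamma s) *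
      ∫ t in Ioi (0 : ℝ), exp (-y ^ 2 / (4 * t)) * heatKernel n t x * t ^ (-1 - s) := by
  have hxy : 0 < ‖x‖ ^ 2 + y ^ 2 := by positivity
  have hΓ : Real.Gamma s ≠ 0 := Real.Gamma_ne_zero hs_pole
  refine ⟨integrableOn_exp_mul_heatKernel_mul_rpow hs hxy, ?_⟩
  rw [integral_exp_mul_heatKernel_mul_rpow hs hxy, ← csConst_mul_Gamma n hΓ, csKernel]
  field_simp

/-- **Stinga–Torrea subordination formula for the extension kernel.**
For every `x ∈ ℝⁿ` and `y > 0`, the function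
`t ↦ e^{−y²/(4t)} (4πt)^{−n/2} e^{−|x|²/(4t)} t^{−1−s}` is integrable on `(0,∞)` and
`P_{n,s}(x,y) = (y^{2s}/(4^s Γ(s))) ∫₀^∞ e^{−y²/(4t)} (4πt)^{−n/2} e^{−|x|²/(4t)} t^{−1−s} dt`. -/
theorem csKernel_subordination
    (n : ℕ) (hn : 1 ≤ n) (s : ℝ) (hs : s ∈ Set.Ioo (0 : ℝ) 1)
    (x : EuclideanSpace ℝ (Fin n)) (y : ℝ) (hy : 0 < y) :
    IntegrableOn (fun t : ℝ => Real.exp (-y ^ 2 / (4 * t)) *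
        ((4 * Real.pi * t) ^ (-(n : ℝ) / 2) * Real.exp (-‖x‖ ^ 2 / (4 * t))) *
        t ^ (-1 - s)) (Set.Ioi 0) ∧
    csKernel n s x y
      = (y ^ (2 * s) / ((4 : ℝ) ^ s * Real.Gamma s)) *
        ∫ t in Set.Ioi (0 : ℝ), Real.exp (-y ^ 2 / (4 * t)) *
          ((4 * Real.pi * t) ^ (-(n : ℝ) / 2) * Real.exp (-‖x‖ ^ 2 / (4 * t))) *
          t ^ (-1 - s) :=
  have hs_pole (m : ℕ) : s ≠ -m := by linarith [hs.1, m.cast_nonneg (α := ℝ)]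
  csKernel_subordination_general n (by linarith [hs.1, n.cast_nonneg (α := ℝ)]) hs_pole x hy
end

section
/- Let n ≥ 1 be an integer, s ∈ (0,1), and let u : ℝⁿ → ℝ be bounded and continuous. Then for every x ∈ ℝⁿ, the extension ũ(x,y) := ∫_{ℝⁿ} P_{n,s}(x−z, y) u(z) dz converges to u(x) as y → 0⁺. -/
open MeasureTheory Real Set Filter

/-!
The mass of `P_{n,s}(·, y)` comes from writing the power `(y² + |x|²)^{-r}` as a superposition of
Gaussians, `Γ(r) a^{-r} = ∫₀^∞ t^{r-1} e^{-at} dt`, and integrating in `x` first. Since `P_{n,s}(·, y)`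
is the `L¹`-normalized dilation by `y` of the integrable profile `P_{n,s}(·, 1)`, the substitution
`z = x - y w` moves all dependence on `(x, y)` into `u (x - y w)`, and dominated convergence applies.
-/

open Module Topology

section ApproximateIdentity

variable {E F : Type*} [NormedAddCommGroup E] [NormedSpace ℝ E] [FiniteDimensional ℝ E]
  [MeasurableSpace E] [BorelSpace E] {μ : Measure E} [μ.IsAddHaarMeasure]
  [NormedAddCommGroup F] [NormedSpace ℝ F]

theorem quasiMeasurePreserving_sub_smul (x : E) {y : ℝ} (hy : y ≠ 0) :
    Measure.QuasiMeasurePreserving (fun w : E => x - y • w) μ μ := by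
  have h_smul : Measure.QuasiMeasurePreserving (fun w : E => y • w) μ μ := by
    refine ⟨measurable_const_smul y, ?_⟩
    rw [Measure.map_addHaar_smul μ hy]
    exact Measure.smul_absolutelyContinuous
  exact (quasiMeasurePreserving_sub_left_of_right_invariant μ x).comp h_smul

theorem integral_dilation_smul_eq_integral_smul_comp_sub_smul (φ : E → ℝ) (g : E → F) (x : E)
    {y : ℝ} (hy : 0 < y) :
    ∫ z, ((y ^ finrank ℝ E)⁻¹ * φ (y⁻¹ • (x - z))) • g z ∂μ = ∫ w, φ w • g (x - y • w) ∂μ := by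
  have hyd : y ^ finrank ℝ E ≠ 0 := (pow_pos hy _).ne'
  calc ∫ z, ((y ^ finrank ℝ E)⁻¹ * φ (y⁻¹ • (x - z))) • g z ∂μ
      = ∫ v, ((y ^ finrank ℝ E)⁻¹ * φ (y⁻¹ • v)) • g (x - v) ∂μ := by
        simpa only [sub_sub_cancel] using integral_sub_left_eq_self
          (fun v => ((y ^ finrank ℝ E)⁻¹ * φ (y⁻¹ • v)) • g (x - v)) μ x
    _ = (y ^ finrank ℝ E)⁻¹ • ∫ v, φ (y⁻¹ • v) • g (x - y • (y⁻¹ • v)) ∂μ := by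
        simp only [mul_smul, integral_smul, smul_inv_smul₀ hy.ne']
    _ = ∫ w, φ w • g (x - y • w) ∂μ := by
        rw [Measure.integral_comp_inv_smul_of_nonneg μ (fun w => φ w • g (x - y • w)) hy.le,
          inv_smul_smul₀ hyd]

theorem tendsto_integral_smul_comp_sub_smul [CompleteSpace F] {φ : E → ℝ} (hφ : Integrable φ μ)
    {g : E → F} (hg : MemLp g ⊤ μ) {x : E} (hgx : ContinuousAt g x) :
    Tendsto (fun p : E × ℝ => ∫ w, φ w • g (p.1 - p.2 • w) ∂μ) (𝓝 x ×ˢ 𝓝[>] 0)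
      (𝓝 ((∫ w, φ w ∂μ) • g x)) := by
  have hy_pos : ∀ᶠ p : E × ℝ in 𝓝 x ×ˢ 𝓝[>] 0, 0 < p.2 :=
    tendsto_snd.eventually self_mem_nhdsWithin
  rw [← integral_smul_const]
  refine tendsto_integral_filter_of_dominated_convergence
    (fun w => ‖φ w‖ * lpNorm g ⊤ μ) ?_ ?_ (hφ.norm.mul_const _) ?_
  · filter_upwards [hy_pos] with p hp
    exact hφ.aestronglyMeasurable.smul
      (hg.1.comp_quasiMeasurePreserving (quasiMeasurePreserving_sub_smul p.1 hp.ne'))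
  · filter_upwards [hy_pos] with p hp
    filter_upwards [(quasiMeasurePreserving_sub_smul p.1 hp.ne').ae
      (ae_le_lpNorm_exponent_top hg)] with w hw
    rw [norm_smul]
    gcongr
  · refine Eventually.of_forall fun w => ?_
    have h_arg : Tendsto (fun p : E × ℝ => p.1 - p.2 • w) (𝓝 x ×ˢ 𝓝[>] 0) (𝓝 x) := by
      have h_cont : Continuous fun p : E × ℝ => p.1 - p.2 • w := by fun_prop
      have h_lim := h_cont.tendsto (x, 0)
      rw [zero_smul, sub_zero, nhds_prod_eq] at h_lim
      exact h_lim.mono_left (prod_mono_right _ nhdsWithin_le_nhds)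
    exact (hgx.tendsto.comp h_arg).const_smul (φ w)

theorem tendsto_integral_dilation_smul [CompleteSpace F] {φ : E → ℝ} (hφ : Integrable φ μ)
    {g : E → F} (hg : MemLp g ⊤ μ) {x : E} (hgx : ContinuousAt g x) :
    Tendsto (fun p : E × ℝ => ∫ z, ((p.2 ^ finrank ℝ E)⁻¹ * φ (p.2⁻¹ • (p.1 - z))) • g z ∂μ)
      (𝓝 x ×ˢ 𝓝[>] 0) (𝓝 ((∫ w, φ w ∂μ) • g x)) := by
  refine (tendsto_integral_smul_comp_sub_smul hφ hg hgx).congr' ?_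
  filter_upwards [tendsto_snd.eventually self_mem_nhdsWithin] with p hp
  exact (integral_dilation_smul_eq_integral_smul_comp_sub_smul φ g p.1 hp).symm

end ApproximateIdentity

section GaussianSuperposition

variable {V : Type*} [NormedAddCommGroup V] [InnerProductSpace ℝ V] [FiniteDimensional ℝ V]
  [MeasurableSpace V] [BorelSpace V]

theorem integral_rpow_mul_exp_neg_add_norm_sq_mul (r c : ℝ) {t : ℝ} (ht : 0 < t) :
    ∫ x : V, t ^ (r - 1) * exp (-((c + ‖x‖ ^ 2) * t)) =
      π ^ (finrank ℝ V / 2 : ℝ) * (t ^ (r - finrank ℝ V / 2 - 1) * exp (-(c * t))) := by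
  have h_split (x : V) : t ^ (r - 1) * exp (-((c + ‖x‖ ^ 2) * t)) =
      t ^ (r - 1) * exp (-(c * t)) * exp (-t * ‖x‖ ^ 2) := by
    rw [mul_assoc, ← exp_add]
    ring_nf
  have h_pow : t ^ (r - finrank ℝ V / 2 - 1) = t ^ (r - 1) / t ^ (finrank ℝ V / 2 : ℝ) := by
    rw [← rpow_sub ht]
    ring_nf
  simp_rw [h_split]
  rw [integral_const_mul, GaussianFourier.integral_rexp_neg_mul_sq_norm ht,
    div_rpow pi_pos.le ht.le, h_pow]
  ring

theorem integrable_rpow_mul_exp_neg_add_norm_sq_mul {r c : ℝ} (hr : finrank ℝ V / 2 < r)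
    (hc : 0 < c) :
    Integrable (Function.uncurry fun (x : V) (t : ℝ) =>
        t ^ (r - 1) * exp (-((c + ‖x‖ ^ 2) * t)))
      (volume.prod (volume.restrict (Ioi 0))) := by
  have h_meas : Measurable (Function.uncurry fun (x : V) (t : ℝ) =>
      t ^ (r - 1) * exp (-((c + ‖x‖ ^ 2) * t))) := by
    unfold Function.uncurry
    fun_prop
  rw [integrable_prod_iff' h_meas.aestronglyMeasurable]
  constructor
  · filter_upwards [ae_restrict_mem measurableSet_Ioi] with t (ht : 0 < t)
    refine .of_integral_ne_zero ?_
    simp only [Function.uncurry]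
    rw [integral_rpow_mul_exp_neg_add_norm_sq_mul r c ht]
    positivity
  · have hq : 0 < r - finrank ℝ V / 2 := sub_pos.2 hr
    have h_int : IntegrableOn
        (fun t : ℝ => t ^ (r - finrank ℝ V / 2 - 1) * exp (-(c * t))) (Ioi 0) := by
      refine .of_integral_ne_zero ?_
      rw [integral_rpow_mul_exp_neg_mul_Ioi hq hc]
      have := Gamma_pos_of_pos hq
      positivity
    refine (h_int.const_mul (π ^ (finrank ℝ V / 2 : ℝ))).congr ?_
    filter_upwards [ae_restrict_mem measurableSet_Ioi] with t (ht : 0 < t)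
    rw [← integral_rpow_mul_exp_neg_add_norm_sq_mul r c ht]
    refine integral_congr_ae (.of_forall fun x => ?_)
    exact (norm_of_nonneg (by positivity)).symm

theorem integral_add_norm_sq_rpow_neg {r c : ℝ} (hr : finrank ℝ V / 2 < r) (hc : 0 < c) :
    ∫ x : V, (c + ‖x‖ ^ 2) ^ (-r) =
      π ^ (finrank ℝ V / 2 : ℝ) * Gamma (r - finrank ℝ V / 2) / Gamma r *
        c ^ (finrank ℝ V / 2 - r) := by
  have hr_pos : 0 < r := lt_of_le_of_lt (by positivity) hr
  have h_superposition (x : V) :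
      ∫ t in Ioi (0 : ℝ), t ^ (r - 1) * exp (-((c + ‖x‖ ^ 2) * t)) =
        Gamma r * (c + ‖x‖ ^ 2) ^ (-r) := by
    have hp : 0 < c + ‖x‖ ^ 2 := by positivity
    rw [integral_rpow_mul_exp_neg_mul_Ioi hr_pos hp, one_div, inv_rpow hp.le, rpow_neg hp.le,
      mul_comm]
  have h_mul : Gamma r * ∫ x : V, (c + ‖x‖ ^ 2) ^ (-r) =
      π ^ (finrank ℝ V / 2 : ℝ) * (Gamma (r - finrank ℝ V / 2) * c ^ (finrank ℝ V / 2 - r)) :=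
    calc Gamma r * ∫ x : V, (c + ‖x‖ ^ 2) ^ (-r)
        = ∫ x : V, ∫ t in Ioi (0 : ℝ), t ^ (r - 1) * exp (-((c + ‖x‖ ^ 2) * t)) := by
          simp_rw [h_superposition, integral_const_mul]
      _ = ∫ t in Ioi (0 : ℝ), ∫ x : V, t ^ (r - 1) * exp (-((c + ‖x‖ ^ 2) * t)) :=
          integral_integral_swap (integrable_rpow_mul_exp_neg_add_norm_sq_mul hr hc)
      _ = ∫ t in Ioi (0 : ℝ), π ^ (finrank ℝ V / 2 : ℝ) *
            (t ^ (r - finrank ℝ V / 2 - 1) * exp (-(c * t))) :=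
          setIntegral_congr_fun measurableSet_Ioi fun t ht =>
            integral_rpow_mul_exp_neg_add_norm_sq_mul r c ht
      _ = π ^ (finrank ℝ V / 2 : ℝ) *
            (Gamma (r - finrank ℝ V / 2) * c ^ (finrank ℝ V / 2 - r)) := by
          rw [integral_const_mul, integral_rpow_mul_exp_neg_mul_Ioi (sub_pos.2 hr) hc, one_div,
            inv_rpow hc.le, ← rpow_neg hc.le, neg_sub, mul_comm (Gamma _)]
  have hΓ : Gamma r ≠ 0 := (Gamma_pos_of_pos hr_pos).ne'
  rw [← mul_right_inj' hΓ, h_mul]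
  field_simp

end GaussianSuperposition

section CsKernel

variable {n : ℕ} {s y : ℝ}

theorem csKernel_eq_dilation (x : EuclideanSpace ℝ (Fin n)) (hy : 0 < y) :
    csKernel n s x y = (y ^ n)⁻¹ * csKernel n s (y⁻¹ • x) 1 := by
  have h_base : ‖x‖ ^ 2 + y ^ 2 = y ^ 2 * (‖y⁻¹ • x‖ ^ 2 + 1 ^ 2) := by
    rw [norm_smul, norm_of_nonneg (inv_nonneg.2 hy.le)]
    field_simp
  have h_pow : y ^ (2 * s) * (y ^ 2) ^ (-((n + 2 * s) / 2)) = (y ^ n)⁻¹ := by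
    rw [← rpow_natCast y 2, ← rpow_mul hy.le, ← rpow_add hy, ← rpow_natCast y n, ← rpow_neg hy.le]
    push_cast
    ring_nf
  rw [csKernel, csKernel, h_base, mul_rpow (by positivity) (by positivity), ← h_pow, one_rpow]
  ring

theorem integral_csKernel (hs : 0 < s) (hy : 0 < y) :
    ∫ x : EuclideanSpace ℝ (Fin n), csKernel n s x y = 1 := by
  have hr : (finrank ℝ (EuclideanSpace ℝ (Fin n)) / 2 : ℝ) < (n + 2 * s) / 2 := by
    rw [finrank_euclideanSpace_fin]
    linarith
  have h_exp : (n / 2 - (n + 2 * s) / 2 : ℝ) = -s := by ring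
  have h_sub : ((n + 2 * s) / 2 - n / 2 : ℝ) = s := by ring
  have h_pow : (y ^ 2) ^ (-s) = (y ^ (2 * s))⁻¹ := by
    rw [rpow_neg (by positivity), ← rpow_natCast_mul hy.le, Nat.cast_ofNat]
  have hΓs : Gamma s ≠ 0 := (Gamma_pos_of_pos hs).ne'
  have hΓr : Gamma ((n + 2 * s) / 2) ≠ 0 := (Gamma_pos_of_pos (by positivity)).ne'
  simp_rw [csKernel, add_comm (‖_‖ ^ 2)]
  rw [integral_const_mul, integral_add_norm_sq_rpow_neg hr (by positivity),
    finrank_euclideanSpace_fin, h_exp, h_sub, h_pow, csConst]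
  field_simp [hΓs, hΓr]

end CsKernel

theorem cs_extension_boundary_value_general {F : Type*} [NormedAddCommGroup F] [NormedSpace ℝ F]
    [CompleteSpace F] {n : ℕ} {s : ℝ} (hs : 0 < s) {u : EuclideanSpace ℝ (Fin n) → F}
    (hu : MemLp u ⊤) {x : EuclideanSpace ℝ (Fin n)} (hux : ContinuousAt u x) :
    Tendsto (fun p : EuclideanSpace ℝ (Fin n) × ℝ => ∫ z, csKernel n s (p.1 - z) p.2 • u z)
      (𝓝 x ×ˢ 𝓝[>] 0) (𝓝 (u x)) := by
  have h_mass : ∫ w : EuclideanSpace ℝ (Fin n), csKernel n s w 1 = 1 :=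
    integral_csKernel hs one_pos
  have h_lim := tendsto_integral_dilation_smul (integrable_of_integral_eq_one h_mass) hu hux
  rw [h_mass, one_smul, finrank_euclideanSpace_fin] at h_lim
  refine h_lim.congr' ?_
  filter_upwards [tendsto_snd.eventually self_mem_nhdsWithin] with p hp
  simp only [csKernel_eq_dilation _ hp]

/-- **Attainment of the boundary value in the Caffarelli–Silvestre extension.**
If `u : ℝⁿ → ℝ` is bounded and continuous, then for every `x ∈ ℝⁿ` the extension
`ũ(x,y) = ∫ P_{n,s}(x−z,y) u(z) dz` converges to `u(x)` as `y → 0⁺`. -/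
theorem cs_extension_boundary_value
    (n : ℕ) (hn : 1 ≤ n) (s : ℝ) (hs : s ∈ Set.Ioo (0 : ℝ) 1)
    (u : EuclideanSpace ℝ (Fin n) → ℝ) (hu : Continuous u)
    (hub : ∃ M : ℝ, ∀ x : EuclideanSpace ℝ (Fin n), |u x| ≤ M) :
    ∀ x : EuclideanSpace ℝ (Fin n),
      Tendsto (fun y : ℝ => ∫ z : EuclideanSpace ℝ (Fin n), csKernel n s (x - z) y * u z)
        (nhdsWithin 0 (Set.Ioi 0)) (nhds (u x)) := by
  intro x
  obtain ⟨M, hM⟩ := hub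
  have hu_top : MemLp u ⊤ := memLp_top_of_bound hu.aestronglyMeasurable M (.of_forall hM)
  have h_line : Tendsto (fun y : ℝ => (x, y)) (𝓝[>] 0) (𝓝 x ×ˢ 𝓝[>] 0) :=
    tendsto_const_nhds.prodMk tendsto_id
  simpa only [smul_eq_mul, Function.comp_def] using
    (cs_extension_boundary_value_general hs.1 hu_top hu.continuousAt).comp h_line
end
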